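/- Let (E,d_E) be a separable metric space, let p ≥ 1, let μ ∈ 𝒫_p(E), let n ∈ ℕ and let q ≥ p. Then (𝔼[W_p(μ_n,μ)^p])^{1/p} ≤ 10 · ∑_{k=0}^{⌊log₂ n⌋} a_k · e_{2^k,q}(μ), where a_k = C(p,q)·(2^k/n)^{1/(2p)} if q > 2p, a_k = (⌊log₂ n⌋ + 1)·(2^k/n)^{1/(2p)} if q = 2p, a_k = C(p,q)·(2^k/n)^{1/p − 1/q} if q < 2p, with C(p,q) = 2/|1/(2p) − 1/q|; here μ_n is the empirical measure of μ with sample size n. -/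

import Mathlib

open MeasureTheory ENNReal Filter

noncomputable section

/-- The `p`-Wasserstein distance between two measures on a metric space, as an
extended nonnegative real: the infimum over all couplings `γ` (measures on `E × E`
with the prescribed marginals) of `(∫ d(x,y)^p dγ)^(1/p)`. -/
def Wp {E : Type*} [MetricSpace E] [MeasurableSpace E] (p : ℝ) (μ ν : Measure E) : ℝ≥0∞ :=
  ⨅ γ ∈ {γ : Measure (E × E) | γ.map Prod.fst = μ ∧ γ.map Prod.snd = ν},
    (∫⁻ z, edist z.1 z.2 ^ p ∂γ) ^ (1 / p)

/-- The (uniform) discrete measure `(1/n) ∑ δ_{X i}`. -/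
def empiricalMeasure {E : Type*} [MeasurableSpace E] (n : ℕ) (X : Fin n → E) : Measure E :=
  (n : ℝ≥0∞)⁻¹ • ∑ i, Measure.dirac (X i)

/-- The law of `n` independent samples of `μ`. -/
def sampleMeasure {E : Type*} [MeasurableSpace E] (μ : Measure E) (n : ℕ) :
    Measure (Fin n → E) :=
  Measure.pi fun _ => μ

/-- `𝔼[W_p(μ_n, μ)]`, where `μ_n` is the empirical measure of `μ` with sample size `n`. -/
def expWp {E : Type*} [MetricSpace E] [MeasurableSpace E] (p : ℝ) (μ : Measure E) (n : ℕ) :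
    ℝ≥0∞ :=
  ∫⁻ X, Wp p (empiricalMeasure n X) μ ∂(sampleMeasure μ n)

/-- `(𝔼[W_p(μ_n, μ)^p])^{1/p}`, where `μ_n` is the empirical measure of `μ` with
sample size `n`. -/
def expWpPow {E : Type*} [MetricSpace E] [MeasurableSpace E] (p : ℝ) (μ : Measure E) (n : ℕ) :
    ℝ≥0∞ :=
  (∫⁻ X, (Wp p (empiricalMeasure n X) μ) ^ p ∂(sampleMeasure μ n)) ^ (1 / p)

/-- The optimal uniform quantization error
`b_{n,p}(μ) = inf_{x₁,…,x_n} W_p(μ, (1/n) ∑ δ_{x_i})`. -/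
def unifQuantErr {E : Type*} [MetricSpace E] [MeasurableSpace E] (p : ℝ) (n : ℕ)
    (μ : Measure E) : ℝ≥0∞ :=
  ⨅ x : Fin n → E, Wp p μ (empiricalMeasure n x)

/-- The optimal quantization error `e_{n,p}(μ)`: the infimum of `W_p(μ, ν)` over all
probability measures `ν` supported on at most `n` points. -/
def quantErr {E : Type*} [MetricSpace E] [MeasurableSpace E] (p : ℝ) (n : ℕ)
    (μ : Measure E) : ℝ≥0∞ :=
  ⨅ ν ∈ {ν : Measure E | IsProbabilityMeasure ν ∧
      ∃ S : Finset E, S.card ≤ n ∧ ν (↑S : Set E)ᶜ = 0}, Wp p μ ν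

/-- `μ` has a finite `p`-th moment: `∫ d(x, x₀)^p dμ(x) < ∞` for some `x₀`. -/
def HasFiniteMoment {E : Type*} [MetricSpace E] [MeasurableSpace E] (p : ℝ)
    (μ : Measure E) : Prop :=
  ∃ x₀ : E, ∫⁻ x, edist x x₀ ^ p ∂μ ≠ ∞

end

section helpers

open scoped NNReal

variable {E : Type*} [MetricSpace E] [TopologicalSpace.SeparableSpace E]
    [MeasurableSpace E] [BorelSpace E]

lemma eq_sum_restrict {F : Type*} [MeasurableSpace F] (γ : Measure F) (f : F → E)
    (hf : Measurable f) (S : Finset E) (hS : γ (f ⁻¹' (↑S : Set E)ᶜ) = 0) :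
    γ = ∑ z ∈ S, γ.restrict (f ⁻¹' {z}) := by
  ext A hA
  rw [Measure.finsetSum_apply]
  have h1 : ∀ z ∈ S, γ.restrict (f ⁻¹' {z}) A = γ.restrict A (f ⁻¹' {z}) := by
    intro z _
    rw [Measure.restrict_apply hA, Measure.restrict_apply (hf (measurableSet_singleton z)),
      Set.inter_comm]
  rw [Finset.sum_congr rfl h1, sum_measure_preimage_singleton S
    (fun z _ => hf (measurableSet_singleton z)),
    Measure.restrict_apply (hf S.measurableSet)]
  refine le_antisymm ?_ (measure_mono Set.inter_subset_right)
  calc γ A ≤ γ ((f ⁻¹' (↑S : Set E) ∩ A) ∪ (f ⁻¹' (↑S : Set E)ᶜ)) := by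
        apply measure_mono
        intro x hx
        by_cases h : f x ∈ (↑S : Set E)
        · exact Or.inl ⟨h, hx⟩
        · exact Or.inr h
    _ ≤ _ := measure_union_le _ _
    _ = _ := by rw [hS, add_zero]

lemma exists_glue (β : Measure E) [IsFiniteMeasure β] (S : Finset E) (hS : β (↑S : Set E)ᶜ = 0)
    (γ₁ γ₂ : Measure (E × E)) (h₁ : γ₁.map Prod.snd = β) (h₂ : γ₂.map Prod.fst = β) :
    ∃ η : Measure ((E × E) × (E × E)), η.map Prod.fst = γ₁ ∧ η.map Prod.snd = γ₂ ∧
      ∀ᵐ w ∂η, w.1.2 = w.2.1 := by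
  have m₁ : ∀ A, MeasurableSet A → γ₁ (Prod.snd ⁻¹' A) = β A := fun A hA => by
    rw [← h₁, Measure.map_apply measurable_snd hA]
  have m₂ : ∀ A, MeasurableSet A → γ₂ (Prod.fst ⁻¹' A) = β A := fun A hA => by
    rw [← h₂, Measure.map_apply measurable_fst hA]
  have : IsFiniteMeasure γ₁ := ⟨by
    rw [← Set.preimage_univ (f := (Prod.snd : E × E → E)), m₁ _ MeasurableSet.univ]
    exact measure_lt_top _ _⟩
  have : IsFiniteMeasure γ₂ := ⟨by
    rw [← Set.preimage_univ (f := (Prod.fst : E × E → E)), m₂ _ MeasurableSet.univ]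
    exact measure_lt_top _ _⟩
  refine ⟨∑ z ∈ S, (β {z})⁻¹ • ((γ₁.restrict (Prod.snd ⁻¹' {z})).prod
    (γ₂.restrict (Prod.fst ⁻¹' {z}))), ?_, ?_, ?_⟩
  · rw [Measure.map_finset_sum measurable_fst.aemeasurable]
    conv_rhs => rw [eq_sum_restrict γ₁ Prod.snd measurable_snd S
      (by rw [m₁ _ S.measurableSet.compl, hS])]
    refine Finset.sum_congr rfl fun z _ => ?_
    rw [Measure.map_smul, Measure.map_fst_prod, smul_smul, Measure.restrict_apply_univ,
      m₂ _ (measurableSet_singleton z)]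
    by_cases hz : β {z} = 0
    · have : γ₁.restrict (Prod.snd ⁻¹' {z}) = 0 := by
        rw [Measure.restrict_eq_zero, m₁ _ (measurableSet_singleton z), hz]
      rw [this, smul_zero]
    · rw [ENNReal.inv_mul_cancel hz (measure_ne_top _ _), one_smul]
  · rw [Measure.map_finset_sum measurable_snd.aemeasurable]
    conv_rhs => rw [eq_sum_restrict γ₂ Prod.fst measurable_fst S
      (by rw [m₂ _ S.measurableSet.compl, hS])]
    refine Finset.sum_congr rfl fun z _ => ?_
    rw [Measure.map_smul, Measure.map_snd_prod, smul_smul, Measure.restrict_apply_univ,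
      m₁ _ (measurableSet_singleton z)]
    by_cases hz : β {z} = 0
    · have : γ₂.restrict (Prod.fst ⁻¹' {z}) = 0 := by
        rw [Measure.restrict_eq_zero, m₂ _ (measurableSet_singleton z), hz]
      rw [this, smul_zero]
    · rw [ENNReal.inv_mul_cancel hz (measure_ne_top _ _), one_smul]
  · rw [ae_iff, Measure.finsetSum_apply]
    refine Finset.sum_eq_zero fun z _ => ?_
    rw [Measure.smul_apply]
    have : ∀ᵐ w ∂((γ₁.restrict (Prod.snd ⁻¹' {z})).prod (γ₂.restrict (Prod.fst ⁻¹' {z}))),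
        w.1.2 = w.2.1 := by
      rw [Measure.prod_restrict]
      filter_upwards [ae_restrict_mem
        ((measurable_snd (measurableSet_singleton z)).prod
          (measurable_fst (measurableSet_singleton z)))] with w hw
      have h1 : w.1.2 = z := hw.1
      have h2 : w.2.1 = z := hw.2
      rw [h1, h2]
    rw [ae_iff] at this
    rw [this, smul_zero]

lemma Wp_le (p : ℝ) {α β : Measure E} (γ : Measure (E × E)) (h₁ : γ.map Prod.fst = α)
    (h₂ : γ.map Prod.snd = β) : Wp p α β ≤ (∫⁻ z, edist z.1 z.2 ^ p ∂γ) ^ (1 / p) :=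
  iInf₂_le (f := fun γ (_ : γ ∈ {γ : Measure (E × E) | γ.map Prod.fst = α ∧
    γ.map Prod.snd = β}) => (∫⁻ z, edist z.1 z.2 ^ p ∂γ) ^ (1 / p)) γ ⟨h₁, h₂⟩

lemma measurable_edist_rpow (p : ℝ) :
    Measurable (fun z : E × E => edist z.1 z.2 ^ p) := by
  have := UniformSpace.secondCountable_of_separable E
  exact (measurable_fst.edist measurable_snd).pow_const p

lemma Wp_triangle (p : ℝ) (hp : 1 ≤ p) (α β c : Measure E) [IsFiniteMeasure β]
    (S : Finset E) (hS : β (↑S : Set E)ᶜ = 0) :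
    Wp p α c ≤ Wp p α β + Wp p β c := by
  have := UniformSpace.secondCountable_of_separable E
  conv_rhs => unfold Wp
  simp only [ENNReal.iInf_add, ENNReal.add_iInf]
  refine le_iInf₂ fun γ₂ h₂ => le_iInf₂ fun γ₁ h₁ => ?_
  obtain ⟨η, e₁, e₂, hη⟩ := exists_glue β S hS γ₁ γ₂ h₁.2 h₂.1
  have mm : Measurable (fun w : (E × E) × (E × E) => (w.1.1, w.2.2)) := by fun_prop
  refine (Wp_le p (η.map fun w => (w.1.1, w.2.2)) ?_ ?_).trans ?_
  · rw [Measure.map_map measurable_fst mm, ← h₁.1, ← e₁,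
      Measure.map_map measurable_fst measurable_fst]; rfl
  · rw [Measure.map_map measurable_snd mm, ← h₂.2, ← e₂,
      Measure.map_map measurable_snd measurable_snd]; rfl
  rw [lintegral_map (measurable_edist_rpow p) mm, ← e₁, ← e₂,
    lintegral_map (measurable_edist_rpow p) measurable_fst,
    lintegral_map (measurable_edist_rpow p) measurable_snd]
  refine le_trans ?_ (ENNReal.lintegral_Lp_add_le (μ := η)
    (f := fun w => edist w.1.1 w.1.2) (g := fun w => edist w.2.1 w.2.2)
    (Measurable.aemeasurable (by fun_prop)) (Measurable.aemeasurable (by fun_prop)) hp)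
  refine ENNReal.rpow_le_rpow ?_ (by positivity)
  refine lintegral_mono_ae ?_
  filter_upwards [hη] with w hw
  refine ENNReal.rpow_le_rpow ?_ (by positivity)
  simp only [Pi.add_apply]
  rw [← hw]
  exact edist_triangle _ _ _

lemma Wp_self (p : ℝ) (hp : 1 ≤ p) (c : Measure E) : Wp p c c = 0 := by
  have md : Measurable (fun x : E => (x, x)) := by fun_prop
  refine le_antisymm ((Wp_le p (c.map fun x => (x, x)) ?_ ?_).trans ?_) bot_le
  · rw [Measure.map_map measurable_fst md]; exact Measure.map_id
  · rw [Measure.map_map measurable_snd md]; exact Measure.map_id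
  · rw [lintegral_map (measurable_edist_rpow p) md]
    have : 0 < p := by linarith
    simp [this]

lemma Wp_add_common (p : ℝ) (hp : 1 ≤ p) (α β c : Measure E) :
    Wp p (α + c) (β + c) ≤ Wp p α β := by
  conv_rhs => unfold Wp
  refine le_iInf₂ fun γ h => ?_
  have md : Measurable (fun x : E => (x, x)) := by fun_prop
  refine (Wp_le p (γ + c.map fun x => (x, x)) ?_ ?_).trans ?_
  · rw [Measure.map_add _ _ measurable_fst, h.1, Measure.map_map measurable_fst md]
    congr 1; exact Measure.map_id
  · rw [Measure.map_add _ _ measurable_snd, h.2, Measure.map_map measurable_snd md]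
    congr 1; exact Measure.map_id
  · rw [lintegral_add_measure, lintegral_map (measurable_edist_rpow p) md]
    have : 0 < p := by linarith
    simp [this]

/-- finitely supported measure with weights `a` at points `s`. -/
noncomputable def wm (s : ℕ → E) (N : ℕ) (a : ℕ → ℝ≥0) : Measure E :=
  ∑ i ∈ Finset.range N, (a i : ℝ≥0∞) • Measure.dirac (s i)

instance wm_finite (s : ℕ → E) (N : ℕ) (a : ℕ → ℝ≥0) : IsFiniteMeasure (wm s N a) := by
  refine ⟨?_⟩
  rw [wm, Measure.finsetSum_apply]
  simp [ENNReal.sum_lt_top]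

open Classical in
lemma wm_supp (s : ℕ → E) (N : ℕ) (a : ℕ → ℝ≥0) :
    wm s N a (↑((Finset.range N).image s) : Set E)ᶜ = 0 := by
  rw [wm, Measure.finsetSum_apply]
  refine Finset.sum_eq_zero fun i hi => ?_
  rw [Measure.smul_apply, Measure.dirac_apply' _ (Finset.measurableSet _).compl]
  rw [Set.indicator_of_notMem, smul_zero]
  simp only [Set.mem_compl_iff, not_not, Finset.mem_coe]
  exact Finset.mem_image_of_mem _ hi

lemma wm_add (s : ℕ → E) (N : ℕ) (a b : ℕ → ℝ≥0) :
    wm s N (fun i => a i + b i) = wm s N a + wm s N b := by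
  simp only [wm, ENNReal.coe_add, add_smul, Finset.sum_add_distrib]

lemma Wp_kernel (p : ℝ) (s t : ℕ → E) (N M : ℕ) (a : ℕ → ℝ≥0)
    (P : ℕ → ℕ → ℝ≥0) (hP : ∀ i, ∑ j ∈ Finset.range M, P i j = 1) :
    Wp p (wm s N a) (wm t M fun j => ∑ i ∈ Finset.range N, a i * P i j) ≤
      (∑ i ∈ Finset.range N, (a i : ℝ≥0∞) *
        ∑ j ∈ Finset.range M, (P i j : ℝ≥0∞) * edist (s i) (t j) ^ p) ^ (1 / p) := by
  refine (Wp_le p (∑ i ∈ Finset.range N, ∑ j ∈ Finset.range M,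
    ((a i * P i j : ℝ≥0) : ℝ≥0∞) • Measure.dirac (s i, t j)) ?_ ?_).trans (le_of_eq ?_)
  · rw [Measure.map_finset_sum measurable_fst.aemeasurable, wm]
    refine Finset.sum_congr rfl fun i _ => ?_
    rw [Measure.map_finset_sum measurable_fst.aemeasurable]
    simp only [Measure.map_smul, Measure.map_dirac' measurable_fst]
    rw [← Finset.sum_smul, ← ENNReal.ofNNReal_finsetSum, ← Finset.mul_sum, hP, mul_one]
  · rw [Finset.sum_comm, Measure.map_finset_sum measurable_snd.aemeasurable, wm]
    refine Finset.sum_congr rfl fun j _ => ?_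
    rw [Measure.map_finset_sum measurable_snd.aemeasurable]
    simp only [Measure.map_smul, Measure.map_dirac' measurable_snd]
    rw [← Finset.sum_smul, ← ENNReal.ofNNReal_finsetSum]
  · congr 1
    rw [lintegral_finsetSum_measure]
    refine Finset.sum_congr rfl fun i _ => ?_
    rw [lintegral_finsetSum_measure, Finset.mul_sum]
    refine Finset.sum_congr rfl fun j _ => ?_
    rw [lintegral_smul_measure, lintegral_dirac' _ (measurable_edist_rpow p), ENNReal.coe_mul,
      smul_eq_mul, mul_assoc]

lemma Wp_comm (p : ℝ) (α β : Measure E) : Wp p α β = Wp p β α := by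
  have key : ∀ α β : Measure E, Wp p α β ≤ Wp p β α := by
    intro α β
    conv_rhs => unfold Wp
    refine le_iInf₂ fun γ h => ?_
    refine (Wp_le p (γ.map Prod.swap) ?_ ?_).trans (le_of_eq ?_)
    · rw [Measure.map_map measurable_fst measurable_swap]; exact h.2
    · rw [Measure.map_map measurable_snd measurable_swap]; exact h.1
    · rw [lintegral_map (measurable_edist_rpow p) measurable_swap]
      simp only [Prod.fst_swap, Prod.snd_swap, edist_comm]
  exact le_antisymm (key _ _) (key _ _)

/-- kernel cost -/
noncomputable def kcost (p : ℝ) (s : ℕ → ℕ → E) (P : ℕ → ℕ → ℕ → ℝ≥0) (k i : ℕ) : ℝ≥0∞ :=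
  ∑ j ∈ Finset.range (2 ^ k), (P k i j : ℝ≥0∞) * edist (s (k + 1) i) (s k j) ^ p

/-- flow cost -/
noncomputable def fcost (p : ℝ) (s : ℕ → ℕ → E) (P : ℕ → ℕ → ℕ → ℝ≥0) (A B : ℕ → ℕ → ℝ≥0)
    (k : ℕ) : ℝ≥0∞ :=
  (∑ i ∈ Finset.range (2 ^ (k + 1)),
    ((A (k + 1) i - B (k + 1) i : ℝ≥0) : ℝ≥0∞) * kcost p s P k i) ^ (1 / p)

lemma Wp_chain (p : ℝ) (hp : 1 ≤ p) (s : ℕ → ℕ → E) (P : ℕ → ℕ → ℕ → ℝ≥0)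
    (hP : ∀ k i, ∑ j ∈ Finset.range (2 ^ k), P k i j = 1)
    (A B : ℕ → ℕ → ℝ≥0) (K : ℕ)
    (hA : ∀ k < K, ∀ j, A k j = ∑ i ∈ Finset.range (2 ^ (k + 1)), A (k + 1) i * P k i j)
    (hB : ∀ k < K, ∀ j, B k j = ∑ i ∈ Finset.range (2 ^ (k + 1)), B (k + 1) i * P k i j)
    (h0 : A 0 0 = B 0 0) :
    ∀ k ≤ K, ∀ a b c : ℕ → ℝ≥0, (∀ i, a i + c i = A k i) → (∀ i, b i + c i = B k i) →
      Wp p (wm (s k) (2 ^ k) a) (wm (s k) (2 ^ k) b) ≤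
        ∑ j ∈ Finset.range k, (fcost p s P A B j + fcost p s P B A j) := by
  classical
  intro k
  induction k with
  | zero =>
    intro _ a b c ha hb
    have : a 0 = b 0 := by
      have h1 := ha 0
      rw [h0, ← hb 0] at h1
      exact add_right_cancel h1
    have e : wm (s 0) (2 ^ 0) a = wm (s 0) (2 ^ 0) b := by
      simp [wm, this]
    rw [e, Wp_self p hp]
    exact bot_le
  | succ k ih =>
    intro hk a b c ha hb
    have hd1 : ∀ i, a i - b i = A (k + 1) i - B (k + 1) i := fun i => by
      rw [← ha, ← hb, add_tsub_add_eq_tsub_right]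
    have hd2 : ∀ i, b i - a i = B (k + 1) i - A (k + 1) i := fun i => by
      rw [← ha, ← hb, add_tsub_add_eq_tsub_right]
    have hma : ∀ i, (a i - b i) + min (a i) (b i) = a i := fun i => by
      rcases le_total (a i) (b i) with h | h
      · rw [tsub_eq_zero_of_le h, min_eq_left h, zero_add]
      · rw [min_eq_right h, tsub_add_cancel_of_le h]
    have hmb : ∀ i, (b i - a i) + min (a i) (b i) = b i := fun i => by
      rcases le_total (a i) (b i) with h | h
      · rw [min_eq_left h, tsub_add_cancel_of_le h]
      · rw [tsub_eq_zero_of_le h, min_eq_right h, zero_add]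
    set a' : ℕ → ℝ≥0 := fun i => a i - b i with ha'
    set b' : ℕ → ℝ≥0 := fun i => b i - a i with hb'
    set m : ℕ → ℝ≥0 := fun i => min (a i) (b i) with hm
    have ea : a = fun i => a' i + m i := by ext1 i; exact (hma i).symm
    have eb : b = fun i => b' i + m i := by ext1 i; exact (hmb i).symm
    have step1 : Wp p (wm (s (k + 1)) (2 ^ (k + 1)) a) (wm (s (k + 1)) (2 ^ (k + 1)) b) ≤
        Wp p (wm (s (k + 1)) (2 ^ (k + 1)) a') (wm (s (k + 1)) (2 ^ (k + 1)) b') := by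
      rw [ea, eb, wm_add, wm_add]
      exact Wp_add_common p hp _ _ _
    refine step1.trans ?_
    set N := 2 ^ (k + 1) with hN
    set Pa : ℕ → ℝ≥0 := fun j => ∑ i ∈ Finset.range N, a' i * P k i j
    set Pb : ℕ → ℝ≥0 := fun j => ∑ i ∈ Finset.range N, b' i * P k i j
    have t1 := Wp_triangle p hp (wm (s (k + 1)) N a') (wm (s k) (2 ^ k) Pa)
      (wm (s (k + 1)) N b') _ (wm_supp _ _ _)
    have t2 := Wp_triangle p hp (wm (s k) (2 ^ k) Pa) (wm (s k) (2 ^ k) Pb)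
      (wm (s (k + 1)) N b') _ (wm_supp _ _ _)
    have k1 := Wp_kernel p (s (k + 1)) (s k) N (2 ^ k) a' (P k) (hP k)
    have k2 := Wp_kernel p (s (k + 1)) (s k) N (2 ^ k) b' (P k) (hP k)
    have k3 := ih (by omega) Pa Pb (fun j => ∑ i ∈ Finset.range N, (m i + c i) * P k i j)
      (fun j => by
        rw [hA k (by omega) j, ← Finset.sum_add_distrib]
        refine Finset.sum_congr rfl fun i _ => ?_
        rw [← ha i, ← add_mul, ← add_assoc, hma])
      (fun j => by
        rw [hB k (by omega) j, ← Finset.sum_add_distrib]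
        refine Finset.sum_congr rfl fun i _ => ?_
        rw [← hb i, ← add_mul, ← add_assoc, hmb])
    rw [Finset.sum_range_succ]
    have f1 : fcost p s P A B k = (∑ i ∈ Finset.range N, (a' i : ℝ≥0∞) *
        ∑ j ∈ Finset.range (2 ^ k), (P k i j : ℝ≥0∞) * edist (s (k + 1) i) (s k j) ^ p) ^ (1 / p)
        := by
      simp only [fcost, kcost, ← hd1]
      rfl
    have f2 : fcost p s P B A k = (∑ i ∈ Finset.range N, (b' i : ℝ≥0∞) *
        ∑ j ∈ Finset.range (2 ^ k), (P k i j : ℝ≥0∞) * edist (s (k + 1) i) (s k j) ^ p) ^ (1 / p)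
        := by
      simp only [fcost, kcost, ← hd2]
      rfl
    rw [← f1] at k1
    rw [← f2, Wp_comm] at k2
    calc _ ≤ _ := t1
      _ ≤ fcost p s P A B k + (∑ j ∈ Finset.range k, (fcost p s P A B j + fcost p s P B A j)
          + fcost p s P B A k) := add_le_add k1 (t2.trans (add_le_add k3 k2))
      _ = _ := by ring

section prob

variable {F : Type*} [MeasurableSpace F]

lemma lintegral_Lp_sum_le (ρ : Measure F) (p : ℝ) (hp : 1 ≤ p) (f : ℕ → F → ℝ≥0∞)
    (hf : ∀ k, Measurable (f k)) (K : ℕ) :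
    (∫⁻ x, (∑ k ∈ Finset.range K, f k x) ^ p ∂ρ) ^ (1 / p) ≤
      ∑ k ∈ Finset.range K, (∫⁻ x, f k x ^ p ∂ρ) ^ (1 / p) := by
  have hp0 : 0 < p := by linarith
  induction K with
  | zero => simp [hp0]
  | succ K ih =>
    simp only [Finset.sum_range_succ]
    refine (ENNReal.lintegral_Lp_add_le (f := fun x => ∑ k ∈ Finset.range K, f k x)
      (g := f K) (Finset.measurable_sum _ fun k _ => hf k).aemeasurable
      (hf K).aemeasurable hp).trans ?_
    gcongr

lemma lintegral_le_sqrt (ρ : Measure F) [IsProbabilityMeasure ρ] (f : F → ℝ≥0∞)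
    (hf : Measurable f) : ∫⁻ x, f x ∂ρ ≤ (∫⁻ x, f x ^ 2 ∂ρ) ^ (1 / 2 : ℝ) := by
  have := ENNReal.lintegral_mul_norm_pow_le (μ := ρ) (f := fun x => f x ^ 2) (g := fun _ => 1)
    (hf.pow_const 2).aemeasurable aemeasurable_const (p := 1 / 2) (q := 1 / 2)
    (by norm_num) (by norm_num) (by norm_num)
  refine le_trans (le_of_eq ?_) (this.trans (le_of_eq ?_))
  · refine lintegral_congr fun x => ?_
    rw [ENNReal.one_rpow, mul_one, ← ENNReal.rpow_natCast, ← ENNReal.rpow_mul]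
    norm_num
  · simp

lemma lintegral_rpow_mono (ρ : Measure F) [IsProbabilityMeasure ρ] (f : F → ℝ≥0∞)
    (hf : Measurable f) (r q : ℝ) (hr : 0 < r) (hq : r ≤ q) :
    (∫⁻ x, f x ^ r ∂ρ) ^ (1 / r) ≤ (∫⁻ x, f x ^ q ∂ρ) ^ (1 / q) := by
  have hq0 : 0 < q := hr.trans_le hq
  have := ENNReal.lintegral_mul_norm_pow_le (μ := ρ) (f := fun x => f x ^ q) (g := fun _ => 1)
    (hf.pow_const q).aemeasurable aemeasurable_const (p := r / q) (q := 1 - r / q)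
    (by positivity) (by rw [sub_nonneg, div_le_one hq0]; exact hq) (by ring)
  have h2 : ∫⁻ x, f x ^ r ∂ρ ≤ (∫⁻ x, f x ^ q ∂ρ) ^ (r / q) := by
    refine le_trans (le_of_eq ?_) (this.trans (le_of_eq ?_))
    · refine lintegral_congr fun x => ?_
      rw [ENNReal.one_rpow, mul_one, ← ENNReal.rpow_mul]
      congr 1; field_simp
    · simp
  refine (ENNReal.rpow_le_rpow h2 (by positivity)).trans (le_of_eq ?_)
  rw [← ENNReal.rpow_mul]
  congr 1; field_simp

/-- empirical mean -/
noncomputable def emean (n : ℕ) (h : F → ℝ≥0) (X : Fin n → F) : ℝ≥0 :=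
  (n : ℝ≥0)⁻¹ * ∑ l, h (X l)

lemma measurable_emean (n : ℕ) (h : F → ℝ≥0) (hh : Measurable h) :
    Measurable (emean n h) := by
  unfold emean; fun_prop

lemma lintegral_eval (μ : Measure F) [IsProbabilityMeasure μ] (n : ℕ) (l : Fin n)
    (f : F → ℝ≥0∞) (hf : Measurable f) :
    ∫⁻ X, f (X l) ∂(sampleMeasure μ n) = ∫⁻ x, f x ∂μ := by
  have := (measurePreserving_eval (fun _ : Fin n => μ) l).lintegral_comp hf
  exact this

instance (μ : Measure F) [IsProbabilityMeasure μ] (n : ℕ) :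
    IsProbabilityMeasure (sampleMeasure μ n) := by unfold sampleMeasure; infer_instance

lemma lintegral_emean (μ : Measure F) [IsProbabilityMeasure μ] (n : ℕ) (hn : 1 ≤ n)
    (f : F → ℝ≥0∞) (hf : Measurable f) :
    ∫⁻ X, (n : ℝ≥0∞)⁻¹ * ∑ l, f (X l) ∂(sampleMeasure μ n) = ∫⁻ x, f x ∂μ := by
  rw [lintegral_const_mul _ (by fun_prop), lintegral_finsetSum _ (by fun_prop)]
  simp only [lintegral_eval μ n _ f hf]
  rw [Finset.sum_const, Finset.card_univ, Fintype.card_fin, nsmul_eq_mul, ← mul_assoc,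
    ENNReal.inv_mul_cancel (by simp; omega) (by simp), one_mul]

lemma emean_coe (n : ℕ) (hn : 1 ≤ n) (h : F → ℝ≥0) (X : Fin n → F) :
    (emean n h X : ℝ≥0∞) = (n : ℝ≥0∞)⁻¹ * ∑ l, (h (X l) : ℝ≥0∞) := by
  rw [emean, ENNReal.coe_mul, ENNReal.coe_inv (by simp; omega), ENNReal.ofNNReal_finsetSum]
  simp

lemma lintegral_emean_sub (μ : Measure F) [IsProbabilityMeasure μ] (n : ℕ) (hn : 1 ≤ n)
    (h : F → ℝ≥0) (hh : Measurable h) (h1 : ∀ x, h x ≤ 1) (ν : ℝ≥0)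
    (hν : ∫⁻ x, h x ∂μ = ν) :
    ∫⁻ X, ‖(emean n h X : ℝ) - ν‖ₑ ∂(sampleMeasure μ n) ≤
      ((ν : ℝ≥0∞) * (n : ℝ≥0∞)⁻¹) ^ (1 / 2 : ℝ) := by
  have hn0 : (0 : ℝ) < n := by exact_mod_cast hn
  have mh : Measurable (fun x => (h x : ℝ)) := hh.coe_nnreal_real
  have me := (measurable_emean n h hh).coe_nnreal_real
  refine (lintegral_le_sqrt _ _ (by fun_prop)).trans ?_
  refine ENNReal.rpow_le_rpow ?_ (by norm_num)
  have hint : ∫ x, (h x : ℝ) ∂μ = ν := by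
    rw [integral_eq_lintegral_of_nonneg_ae (by filter_upwards with x; positivity)
      mh.aestronglyMeasurable]
    simp only [ENNReal.ofReal_coe_nnreal, hν, ENNReal.coe_toReal]
  have hbd : ∀ x, ‖(h x : ℝ)‖ ≤ 1 := fun x => by
    rw [Real.norm_of_nonneg (by positivity)]; exact_mod_cast h1 x
  have hL : ∀ c : ℝ, MemLp (fun x => c * (h x : ℝ)) 2 μ := fun c => by
    refine MemLp.const_mul ?_ c
    exact MemLp.of_bound mh.aestronglyMeasurable 1 (by filter_upwards with x; exact hbd x)
  have eA : (fun X => (emean n h X : ℝ)) =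
      ∑ l : Fin n, fun X : Fin n → F => (n : ℝ)⁻¹ * (h (X l) : ℝ) := by
    ext X
    simp [emean, Finset.mul_sum]
  have hmean : ∫ X, (emean n h X : ℝ) ∂(sampleMeasure μ n) = ν := by
    rw [integral_eq_lintegral_of_nonneg_ae (by filter_upwards with x; positivity)
      me.aestronglyMeasurable]
    simp only [ENNReal.ofReal_coe_nnreal, emean_coe n hn]
    rw [lintegral_emean μ n hn (fun x => (h x : ℝ≥0∞)) (by fun_prop), hν, ENNReal.coe_toReal]
  have hvar : ProbabilityTheory.variance (fun X => (emean n h X : ℝ)) (sampleMeasure μ n) ≤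
      ν * (n : ℝ)⁻¹ := by
    rw [eA, sampleMeasure, ProbabilityTheory.variance_sum_pi
      (X := fun (_ : Fin n) x => (n : ℝ)⁻¹ * (h x : ℝ)) (fun _ => hL _)]
    simp only [ProbabilityTheory.variance_const_mul]
    have v1 : ProbabilityTheory.variance (fun x => (h x : ℝ)) μ ≤ ν := by
      refine (ProbabilityTheory.variance_le_expectation_sq mh.aestronglyMeasurable).trans ?_
      rw [← hint]
      have hi : Integrable (fun x => (h x : ℝ)) μ :=
        Integrable.of_bound mh.aestronglyMeasurable 1 (by filter_upwards with x; exact hbd x)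
      refine integral_mono_of_nonneg (by filter_upwards with x; exact sq_nonneg _) hi ?_
      filter_upwards with x
      have : (h x : ℝ) ≤ 1 := by exact_mod_cast h1 x
      have : (0 : ℝ) ≤ h x := by positivity
      simp only [Pi.pow_apply]
      nlinarith
    rw [Finset.sum_const, Finset.card_univ, Fintype.card_fin, nsmul_eq_mul]
    calc (n : ℝ) * ((n : ℝ)⁻¹ ^ 2 * _) ≤ (n : ℝ) * ((n : ℝ)⁻¹ ^ 2 * ν) := by gcongr
      _ = _ := by field_simp
  have hLA : MemLp (fun X => (emean n h X : ℝ)) 2 (sampleMeasure μ n) := by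
    refine MemLp.of_bound me.aestronglyMeasurable 1 ?_
    filter_upwards with X
    rw [Real.norm_of_nonneg (by positivity)]
    have : emean n h X ≤ 1 := by
      have hs : ∑ l, h (X l) ≤ n := by
        refine (Finset.sum_le_sum fun l _ => h1 (X l)).trans ?_
        simp
      calc emean n h X ≤ (n : ℝ≥0)⁻¹ * n := by unfold emean; gcongr
        _ = 1 := inv_mul_cancel₀ (by simp; omega)
    exact_mod_cast this
  have := hLA.ofReal_variance_eq
  rw [ProbabilityTheory.evariance, hmean] at this
  rw [← this]
  refine (ENNReal.ofReal_le_ofReal hvar).trans (le_of_eq ?_)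
  rw [ENNReal.ofReal_mul (by positivity), ENNReal.ofReal_coe_nnreal,
    ENNReal.ofReal_inv_of_pos hn0, ENNReal.ofReal_natCast]

lemma interp (w ν m : ℝ≥0∞) (hν : ν ≠ ∞) (h1 : w ≤ ν) (h2 : w ≤ (ν * m) ^ (1 / 2 : ℝ))
    (t : ℝ) (ht0 : 0 ≤ t) (ht : t ≤ 1 / 2) : w ≤ m ^ t * (ν * (ν⁻¹) ^ t) := by
  by_cases h0 : ν = 0
  · rw [h0] at h1; exact h1.trans bot_le
  calc w = w ^ (2 * t) * w ^ (1 - 2 * t) := by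
        rw [← ENNReal.rpow_add_of_nonneg _ _ (by linarith) (by linarith)]
        simp
    _ ≤ ((ν * m) ^ (1 / 2 : ℝ)) ^ (2 * t) * ν ^ (1 - 2 * t) := by
        refine mul_le_mul' (ENNReal.rpow_le_rpow h2 (by linarith))
          (ENNReal.rpow_le_rpow h1 (by linarith))
    _ = m ^ t * (ν ^ t * ν ^ (1 - 2 * t)) := by
        rw [← ENNReal.rpow_mul, show 1 / 2 * (2 * t) = t by ring,
          ENNReal.mul_rpow_of_nonneg _ _ ht0]
        ring
    _ = m ^ t * (ν * (ν⁻¹) ^ t) := by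
        rw [← ENNReal.rpow_add _ _ h0 hν, ENNReal.inv_rpow, ← ENNReal.rpow_neg]
        nth_rewrite 2 [← ENNReal.rpow_one ν]
        rw [← ENNReal.rpow_add _ _ h0 hν]
        ring_nf

lemma weight_bound (μ : Measure F) [IsProbabilityMeasure μ] (n : ℕ) (hn : 1 ≤ n)
    (h : F → ℝ≥0) (hh : Measurable h) (h1 : ∀ x, h x ≤ 1) (ν : ℝ≥0)
    (hν : ∫⁻ x, h x ∂μ = ν) (t : ℝ) (ht0 : 0 ≤ t) (ht : t ≤ 1 / 2) :
    ∫⁻ X, ((emean n h X - ν : ℝ≥0) : ℝ≥0∞) ∂(sampleMeasure μ n) ≤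
      ((n : ℝ≥0∞)⁻¹) ^ t * (ν * ((ν : ℝ≥0∞)⁻¹) ^ t) ∧
    ∫⁻ X, ((ν - emean n h X : ℝ≥0) : ℝ≥0∞) ∂(sampleMeasure μ n) ≤
      ((n : ℝ≥0∞)⁻¹) ^ t * (ν * ((ν : ℝ≥0∞)⁻¹) ^ t) := by
  have key := lintegral_emean_sub μ n hn h hh h1 ν hν
  have hm : ∫⁻ X, (emean n h X : ℝ≥0∞) ∂(sampleMeasure μ n) = ν := by
    simp only [emean_coe n hn]
    rw [lintegral_emean μ n hn (fun x => (h x : ℝ≥0∞)) (by fun_prop), hν]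
  have aux : ∀ a b : ℝ≥0, ((a - b : ℝ≥0) : ℝ≥0∞) ≤ ‖(a : ℝ) - b‖ₑ := by
    intro a b
    rcases le_total a b with hab | hab
    · rw [tsub_eq_zero_of_le hab]; simp
    · rw [← NNReal.coe_sub hab]
      simp
  constructor
  · refine interp _ _ _ ENNReal.coe_ne_top ?_ ?_ t ht0 ht
    · rw [← hm]
      refine lintegral_mono fun X => ?_
      exact ENNReal.coe_le_coe.2 tsub_le_self
    · exact (lintegral_mono fun X => aux _ _).trans key
  · refine interp _ _ _ ENNReal.coe_ne_top ?_ ?_ t ht0 ht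
    · calc _ ≤ ∫⁻ X, (ν : ℝ≥0∞) ∂(sampleMeasure μ n) := by
            refine lintegral_mono fun X => ?_
            exact ENNReal.coe_le_coe.2 tsub_le_self
        _ = ν := by simp
    · refine (lintegral_mono fun X => ?_).trans key
      refine (aux _ _).trans (le_of_eq ?_)
      rw [← enorm_neg, neg_sub]

/-- cell weights -/
noncomputable def nuw (μ : Measure F) (π : F → ℕ) (i : ℕ) : ℝ≥0 := (μ (π ⁻¹' {i})).toNNReal

/-- transition probabilities -/
noncomputable def Pw (μ : Measure F) (π' π : F → ℕ) (i j : ℕ) : ℝ≥0 :=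
  if nuw μ π' i = 0 then (if j = 0 then 1 else 0)
  else (μ (π' ⁻¹' {i} ∩ π ⁻¹' {j})).toNNReal / nuw μ π' i

lemma coe_nuw (μ : Measure F) [IsProbabilityMeasure μ] (π : F → ℕ) (i : ℕ) :
    (nuw μ π i : ℝ≥0∞) = μ (π ⁻¹' {i}) := ENNReal.coe_toNNReal (measure_ne_top _ _)

lemma nuw_mul_Pw (μ : Measure F) [IsProbabilityMeasure μ] (π' π : F → ℕ) (i j : ℕ) :
    (nuw μ π' i : ℝ≥0∞) * Pw μ π' π i j = μ (π' ⁻¹' {i} ∩ π ⁻¹' {j}) := by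
  by_cases h : nuw μ π' i = 0
  · rw [h, ENNReal.coe_zero, zero_mul]
    have := coe_nuw μ π' i
    rw [h, ENNReal.coe_zero] at this
    exact (measure_mono_null Set.inter_subset_left this.symm).symm
  · rw [Pw, if_neg h, ← ENNReal.coe_mul, mul_div_cancel₀ _ h,
      ENNReal.coe_toNNReal (measure_ne_top _ _)]

lemma lintegral_cells (μ : Measure F) (π : F → ℕ) (hπ : Measurable π) (N : ℕ)
    (hN : ∀ x, π x < N) (f : ℕ → F → ℝ≥0∞) (hf : ∀ i, Measurable (f i)) :
    ∫⁻ x, f (π x) x ∂μ = ∑ i ∈ Finset.range N, ∫⁻ x in π ⁻¹' {i}, f i x ∂μ := by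
  have e : ∀ x, f (π x) x = ∑ i ∈ Finset.range N, (π ⁻¹' {i}).indicator (f i) x := by
    intro x
    rw [Finset.sum_eq_single_of_mem (π x) (Finset.mem_range.2 (hN x))]
    · rw [Set.indicator_of_mem]; rfl
    · intro i _ hi
      rw [Set.indicator_of_notMem]
      exact fun h => hi h.symm
  simp only [e]
  rw [lintegral_finsetSum _ fun i _ => (hf i).indicator (hπ (measurableSet_singleton i))]
  refine Finset.sum_congr rfl fun i _ => ?_
  rw [lintegral_indicator (hπ (measurableSet_singleton i))]

lemma lintegral_cells1 (μ : Measure F) (π : F → ℕ) (hπ : Measurable π) (N : ℕ)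
    (hN : ∀ x, π x < N) (f : ℕ → ℝ≥0∞) :
    ∫⁻ x, f (π x) ∂μ = ∑ i ∈ Finset.range N, f i * μ (π ⁻¹' {i}) := by
  rw [lintegral_cells μ π hπ N hN (fun i _ => f i) (fun _ => measurable_const)]
  simp

lemma lintegral_cells2 (μ : Measure F) (π' π : F → ℕ) (hπ' : Measurable π') (hπ : Measurable π)
    (N M : ℕ) (hN : ∀ x, π' x < N) (hM : ∀ x, π x < M) (f : ℕ → ℕ → ℝ≥0∞) :
    ∫⁻ x, f (π' x) (π x) ∂μ = ∑ i ∈ Finset.range N, ∑ j ∈ Finset.range M,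
      f i j * μ (π' ⁻¹' {i} ∩ π ⁻¹' {j}) := by
  rw [lintegral_cells μ π' hπ' N hN (fun i x => f i (π x))
    (fun i => (measurable_of_countable (f i)).comp hπ)]
  refine Finset.sum_congr rfl fun i _ => ?_
  rw [lintegral_cells1 _ π hπ M hM]
  refine Finset.sum_congr rfl fun j _ => ?_
  rw [Measure.restrict_apply (hπ (measurableSet_singleton j)), Set.inter_comm]

lemma Pw_sum (μ : Measure F) [IsProbabilityMeasure μ] (π' π : F → ℕ)
    (hπ : Measurable π) (M : ℕ) (h0 : 0 < M) (hM : ∀ x, π x < M) (i : ℕ) :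
    ∑ j ∈ Finset.range M, Pw μ π' π i j = 1 := by
  by_cases h : nuw μ π' i = 0
  · simp only [Pw, if_pos h]
    rw [Finset.sum_ite_eq']
    simp [h0]
  · have h1 : (nuw μ π' i : ℝ≥0∞) * (∑ j ∈ Finset.range M, Pw μ π' π i j : ℝ≥0) =
        nuw μ π' i := by
      rw [ENNReal.ofNNReal_finsetSum, Finset.mul_sum]
      simp only [nuw_mul_Pw]
      have := lintegral_cells1 (μ.restrict (π' ⁻¹' {i})) π hπ M hM (fun _ => 1)
      simp only [lintegral_const, one_mul, Measure.restrict_apply_univ] at this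
      rw [coe_nuw, this]
      refine Finset.sum_congr rfl fun j _ => ?_
      rw [Measure.restrict_apply (hπ (measurableSet_singleton j)), Set.inter_comm]
    have h2 : nuw μ π' i * (∑ j ∈ Finset.range M, Pw μ π' π i j) = nuw μ π' i := by
      exact_mod_cast h1
    exact (mul_eq_left₀ h).1 h2

lemma nuw_step (μ : Measure F) [IsProbabilityMeasure μ] (π' π : F → ℕ)
    (hπ' : Measurable π') (hπ : Measurable π) (N : ℕ) (hN : ∀ x, π' x < N) (j : ℕ) :
    nuw μ π j = ∑ i ∈ Finset.range N, nuw μ π' i * Pw μ π' π i j := by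
  have : (nuw μ π j : ℝ≥0∞) =
      ((∑ i ∈ Finset.range N, nuw μ π' i * Pw μ π' π i j : ℝ≥0) : ℝ≥0∞) := by
    rw [ENNReal.ofNNReal_finsetSum]
    simp only [ENNReal.coe_mul, nuw_mul_Pw]
    have := lintegral_cells1 (μ.restrict (π ⁻¹' {j})) π' hπ' N hN (fun _ => 1)
    simp only [lintegral_const, one_mul, Measure.restrict_apply_univ] at this
    rw [coe_nuw, this]
    refine Finset.sum_congr rfl fun i _ => ?_
    rw [Measure.restrict_apply (hπ' (measurableSet_singleton i))]
  exact_mod_cast this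

lemma holder_cells (μ : Measure F) [IsProbabilityMeasure μ] (π' π : F → ℕ)
    (hπ' : Measurable π') (hπ : Measurable π) (N M : ℕ) (hN : ∀ x, π' x < N)
    (hM : ∀ x, π x < M) (d : ℕ → ℕ → ℝ≥0∞) (p r t : ℝ) (hp : 0 < p) (hr : p ≤ r)
    (ht : t = 1 - p / r) :
    ∑ i ∈ Finset.range N, ((nuw μ π' i : ℝ≥0∞) * ((nuw μ π' i : ℝ≥0∞)⁻¹) ^ t) *
      ∑ j ∈ Finset.range M, (Pw μ π' π i j : ℝ≥0∞) * d i j ^ p ≤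
    (N : ℝ≥0∞) ^ t * (∫⁻ x, d (π' x) (π x) ^ r ∂μ) ^ (p / r) := by
  have hr0 : 0 < r := hp.trans_le hr
  have ht0 : 0 ≤ t := by rw [ht, sub_nonneg, div_le_one hr0]; exact hr
  have e1 : ∑ i ∈ Finset.range N, ((nuw μ π' i : ℝ≥0∞) * ((nuw μ π' i : ℝ≥0∞)⁻¹) ^ t) *
      ∑ j ∈ Finset.range M, (Pw μ π' π i j : ℝ≥0∞) * d i j ^ p =
      ∫⁻ x, ((nuw μ π' (π' x) : ℝ≥0∞)⁻¹) ^ t * (d (π' x) (π x) ^ r) ^ (p / r) ∂μ := by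
    rw [lintegral_cells2 μ π' π hπ' hπ N M hN hM
      (fun i j => ((nuw μ π' i : ℝ≥0∞)⁻¹) ^ t * (d i j ^ r) ^ (p / r))]
    refine Finset.sum_congr rfl fun i _ => ?_
    rw [Finset.mul_sum]
    refine Finset.sum_congr rfl fun j _ => ?_
    rw [← nuw_mul_Pw, ← ENNReal.rpow_mul, mul_div_cancel₀ _ hr0.ne']
    ring
  rw [e1]
  have m2 : Measurable fun x => d (π' x) (π x) ^ r := by
    exact (measurable_of_countable (fun z : ℕ × ℕ => d z.1 z.2 ^ r)).comp (hπ'.prodMk hπ)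
  have m1 : Measurable fun x => (nuw μ π' (π' x) : ℝ≥0∞)⁻¹ :=
    (measurable_of_countable (fun i : ℕ => (nuw μ π' i : ℝ≥0∞)⁻¹)).comp hπ'
  refine (ENNReal.lintegral_mul_norm_pow_le (μ := μ) m1.aemeasurable m2.aemeasurable ht0
    (by positivity) (by rw [ht]; ring)).trans ?_
  gcongr
  rw [lintegral_cells1 μ π' hπ' N hN (fun i => (nuw μ π' i : ℝ≥0∞)⁻¹)]
  calc _ ≤ ∑ i ∈ Finset.range N, (1 : ℝ≥0∞) := by
        refine Finset.sum_le_sum fun i _ => ?_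
        rw [coe_nuw]
        exact ENNReal.inv_mul_le_one _
    _ = N := by simp

end prob

section flow

variable {F : Type*} [MeasurableSpace F]

/-- smoothed cell memberships -/
noncomputable def hrec (μ : Measure F) (π : ℕ → F → ℕ) (K : ℕ) : ℕ → F → ℕ → ℝ≥0
  | 0, x, i => if π K x = i then 1 else 0
  | m + 1, x, j => ∑ i ∈ Finset.range (2 ^ (K - m)),
      hrec μ π K m x i * Pw μ (π (K - m)) (π (K - m - 1)) i j

lemma hrec_meas (μ : Measure F) (π : ℕ → F → ℕ) (hπ : ∀ k, Measurable (π k)) (K m : ℕ) :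
    ∀ i, Measurable fun x => hrec μ π K m x i := by
  induction m with
  | zero =>
    intro i
    exact (measurable_of_countable (fun j : ℕ => if j = i then (1 : ℝ≥0) else 0)).comp (hπ K)
  | succ m ih =>
    intro j
    simp only [hrec]
    exact Finset.measurable_sum _ fun i _ => (ih i).mul_const _

lemma hrec_sum (μ : Measure F) [IsProbabilityMeasure μ] (π : ℕ → F → ℕ)
    (hπ : ∀ k, Measurable (π k)) (hb : ∀ k x, π k x < 2 ^ k) (K m : ℕ) (x : F) :
    ∑ i ∈ Finset.range (2 ^ (K - m)), hrec μ π K m x i = 1 := by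
  induction m with
  | zero =>
    simp only [hrec, Nat.sub_zero]
    rw [Finset.sum_ite_eq]
    simp [hb K x]
  | succ m ih =>
    simp only [hrec]
    rw [Finset.sum_comm, ← ih]
    refine Finset.sum_congr rfl fun i _ => ?_
    rw [← Finset.mul_sum, ← Nat.sub_sub,
      Pw_sum μ _ _ (hπ _) _ (by positivity) (hb _), mul_one]

lemma hrec_mean (μ : Measure F) [IsProbabilityMeasure μ] (π : ℕ → F → ℕ)
    (hπ : ∀ k, Measurable (π k)) (hb : ∀ k x, π k x < 2 ^ k) (K m : ℕ) :
    ∀ i, ∫⁻ x, (hrec μ π K m x i : ℝ≥0∞) ∂μ = nuw μ (π (K - m)) i := by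
  induction m with
  | zero =>
    intro i
    rw [coe_nuw, ← lintegral_indicator_one (hπ _ (measurableSet_singleton i))]
    refine lintegral_congr fun x => ?_
    simp only [hrec, Set.indicator, Nat.sub_zero, Set.mem_preimage, Set.mem_singleton_iff]
    split_ifs <;> simp
  | succ m ih =>
    intro j
    simp only [hrec, ENNReal.ofNNReal_finsetSum, ENNReal.coe_mul]
    rw [lintegral_finsetSum _ fun i _ =>
      ((hrec_meas μ π hπ K m i).coe_nnreal_ennreal.mul_const _)]
    rw [← Nat.sub_sub, nuw_step μ (π (K - m)) (π (K - m - 1)) (hπ _) (hπ _) (2 ^ (K - m)) (hb _) j,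
      ENNReal.ofNNReal_finsetSum]
    refine Finset.sum_congr rfl fun i _ => ?_
    rw [lintegral_mul_const _ (hrec_meas μ π hπ K m i).coe_nnreal_ennreal, ih, ENNReal.coe_mul]

end flow

lemma Wp_map (p : ℝ) (ρ : Measure E) (T : E → E) (hT : Measurable T) :
    Wp p ρ (ρ.map T) ≤ (∫⁻ x, edist x (T x) ^ p ∂ρ) ^ (1 / p) := by
  have md : Measurable (fun x : E => (x, T x)) := by fun_prop
  refine (Wp_le p (ρ.map fun x => (x, T x)) ?_ ?_).trans (le_of_eq ?_)
  · rw [Measure.map_map measurable_fst md]; exact Measure.map_id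
  · rw [Measure.map_map measurable_snd md]; rfl
  · rw [lintegral_map (measurable_edist_rpow p) md]

lemma map_eq_wm (ρ : Measure E) (s : ℕ → E) (π : E → ℕ) (hπ : Measurable π) (N : ℕ)
    (hN : ∀ x, π x < N) (a : ℕ → ℝ≥0) (ha : ∀ i, (a i : ℝ≥0∞) = ρ (π ⁻¹' {i})) :
    ρ.map (fun x => s (π x)) = wm s N a := by
  have ms : Measurable (fun x => s (π x)) := (measurable_of_countable s).comp hπ
  ext A hA
  rw [Measure.map_apply ms hA, ← lintegral_indicator_one (ms hA)]
  have := lintegral_cells1 ρ π hπ N hN (fun i => A.indicator 1 (s i))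
  rw [wm, Measure.finsetSum_apply]
  refine (Eq.trans ?_ this).trans ?_
  · rfl
  · refine Finset.sum_congr rfl fun i _ => ?_
    rw [Measure.smul_apply, Measure.dirac_apply' _ hA, ha, smul_eq_mul, mul_comm]

lemma lintegral_empirical {F : Type*} [MeasurableSpace F] (n : ℕ) (X : Fin n → F)
    (f : F → ℝ≥0∞) (hf : Measurable f) :
    ∫⁻ x, f x ∂(empiricalMeasure n X) = (n : ℝ≥0∞)⁻¹ * ∑ l, f (X l) := by
  rw [empiricalMeasure, lintegral_smul_measure, lintegral_finsetSum_measure, smul_eq_mul]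
  simp only [lintegral_dirac' _ hf]

lemma exists_quant (μ : Measure E) [IsProbabilityMeasure μ] (q : ℝ) (hq : 0 < q) (N : ℕ)
    (δ : ℝ≥0∞) (hδ : δ ≠ 0) :
    ∃ s : ℕ → E, (∫⁻ x, edist x (s (SimpleFunc.nearestPtInd s (N - 1) x)) ^ q ∂μ) ^ (1 / q) ≤
      quantErr q N μ + δ := by
  classical
  have : Nonempty E := by
    by_contra h
    rw [not_nonempty_iff] at h
    have h1 : μ Set.univ = 1 := measure_univ
    rw [Set.univ_eq_empty_iff.2 h, measure_empty] at h1
    exact zero_ne_one h1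
  obtain ⟨x₀⟩ := this
  by_cases htop : quantErr q N μ = ∞
  · exact ⟨fun _ => x₀, by simp [htop]⟩
  have hlt : quantErr q N μ < quantErr q N μ + δ := ENNReal.lt_add_right htop hδ
  conv_lhs at hlt => unfold quantErr
  simp only [iInf_lt_iff] at hlt
  obtain ⟨ν, ⟨hν, S, hSc, hS⟩, hW⟩ := hlt
  refine ⟨fun k => S.toList.getD k x₀, le_trans ?_ hW.le⟩
  set s : ℕ → E := fun k => S.toList.getD k x₀ with hs
  have hmem : ∀ y ∈ S, ∃ k ≤ N - 1, s k = y := by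
    intro y hy
    obtain ⟨k, hk, e⟩ := List.mem_iff_getElem.1 (Finset.mem_toList.2 hy)
    have hk' := hk
    rw [Finset.length_toList] at hk'
    refine ⟨k, by omega, ?_⟩
    rw [hs]
    simp only [List.getD_eq_getElem _ _ hk, e]
  have mT : Measurable fun x => s (SimpleFunc.nearestPtInd s (N - 1) x) :=
    (measurable_of_countable s).comp (SimpleFunc.measurable _)
  unfold Wp
  refine le_iInf₂ fun γ hγ => ?_
  refine ENNReal.rpow_le_rpow ?_ (by positivity)
  have mI : Measurable fun x => edist x (s (SimpleFunc.nearestPtInd s (N - 1) x)) ^ q :=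
    (measurable_edist_rpow q).comp (measurable_id.prodMk mT)
  rw [← hγ.1, lintegral_map mI measurable_fst]
  refine lintegral_mono_ae ?_
  have hae : ∀ᵐ z ∂γ, z.2 ∈ S := by
    have h2 : ∀ᵐ y ∂(γ.map Prod.snd), y ∈ S := by
      rw [hγ.2, ae_iff]; exact hS
    exact ae_of_ae_map measurable_snd.aemeasurable h2
  filter_upwards [hae] with z hz
  obtain ⟨k, hk, e⟩ := hmem _ hz
  refine ENNReal.rpow_le_rpow ?_ hq.le
  have := SimpleFunc.edist_nearestPt_le s z.1 hk
  rw [e, edist_comm, edist_comm z.2] at this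
  exact this

lemma core (μ : Measure E) [IsProbabilityMeasure μ] (p r : ℝ) (hp : 1 ≤ p) (hpr : p ≤ r)
    (hr2 : r ≤ 2 * p) (n : ℕ) (hn : 1 ≤ n) (s : ℕ → ℕ → E) (π : ℕ → E → ℕ)
    (hπ : ∀ k, Measurable (π k)) (hb : ∀ k x, π k x < 2 ^ k) (ε : ℕ → ℝ≥0∞)
    (hε : ∀ k, (∫⁻ x, edist x (s k (π k x)) ^ r ∂μ) ^ (1 / r) ≤ ε k) (K : ℕ) :
    expWpPow p μ n ≤ ε K + ∑ k ∈ Finset.range K,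
      2 * (((2 : ℝ≥0∞) ^ (k + 1) * (n : ℝ≥0∞)⁻¹) ^ (1 / p - 1 / r) * (ε (k + 1) + ε k)) + ε K := by
  have := UniformSpace.secondCountable_of_separable E
  classical
  have hp0 : 0 < p := by linarith
  have hr0 : 0 < r := by linarith
  set t : ℝ := 1 - p / r with ht
  have ht0 : 0 ≤ t := by rw [ht, sub_nonneg, div_le_one hr0]; exact hpr
  have ht2 : t ≤ 1 / 2 := by
    have : 1 / 2 ≤ p / r := by rw [div_le_div_iff₀ (by norm_num) hr0]; linarith
    linarith
  have mT : ∀ k, Measurable fun x => s k (π k x) := fun k =>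
    (measurable_of_countable (s k)).comp (hπ k)
  have mI : ∀ (k : ℕ) (u : ℝ), Measurable fun x => edist x (s k (π k x)) ^ u := fun k u =>
    (measurable_edist_rpow u).comp (measurable_id.prodMk (mT k))
  have mE : ∀ k, Measurable fun x => edist x (s k (π k x)) := fun k =>
    measurable_id.edist (mT k)
  set P : ℕ → ℕ → ℕ → ℝ≥0 := fun k i j => Pw μ (π (k + 1)) (π k) i j with hPdef
  set A : (Fin n → E) → ℕ → ℕ → ℝ≥0 := fun X k i =>
    emean n (fun x => hrec μ π K (K - k) x i) X with hAdef
  set B : ℕ → ℕ → ℝ≥0 := fun k i => nuw μ (π k) i with hBdef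
  have hεp : (∫⁻ x, edist x (s K (π K x)) ^ p ∂μ) ^ (1 / p) ≤ ε K :=
    (lintegral_rpow_mono μ _ (mE K) p r hp0 hpr).trans (hε K)
  -- deterministic bound
  have hdet : ∀ X, Wp p (empiricalMeasure n X) μ ≤
      ((n : ℝ≥0∞)⁻¹ * ∑ l, edist (X l) (s K (π K (X l))) ^ p) ^ (1 / p) +
      (∑ k ∈ Finset.range K, (fcost p s P (A X) B k + fcost p s P B (A X) k) + ε K) := by
    intro X
    have c1 : Wp p (empiricalMeasure n X) (wm (s K) (2 ^ K) (A X K)) ≤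
        ((n : ℝ≥0∞)⁻¹ * ∑ l, edist (X l) (s K (π K (X l))) ^ p) ^ (1 / p) := by
      rw [← lintegral_empirical n X _ (mI K p), ← map_eq_wm (empiricalMeasure n X) (s K) (π K)
        (hπ K) (2 ^ K) (hb K) (A X K) ?_]
      · exact Wp_map p _ _ (mT K)
      · intro i
        rw [← lintegral_indicator_one (hπ K (measurableSet_singleton i)),
          lintegral_empirical n X _
            (measurable_one.indicator (hπ K (measurableSet_singleton i))), hAdef]
        simp only [emean_coe n hn, Nat.sub_self]
        congr 1
        refine Finset.sum_congr rfl fun l _ => ?_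
        simp only [hrec, Set.indicator, Set.mem_preimage, Set.mem_singleton_iff]
        split_ifs <;> simp
    have c3 : Wp p (wm (s K) (2 ^ K) (B K)) μ ≤ ε K := by
      rw [Wp_comm, ← map_eq_wm μ (s K) (π K) (hπ K) (2 ^ K) (hb K) (B K)
        (fun i => coe_nuw μ _ i)]
      exact (Wp_map p _ _ (mT K)).trans hεp
    have c2 := Wp_chain p hp s P
      (fun k i => Pw_sum μ _ _ (hπ _) _ (by positivity) (hb _) i) (A X) B K
      (by
        intro k hk j
        obtain ⟨m, hm⟩ : ∃ m, K - k = m + 1 := ⟨K - k - 1, by omega⟩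
        have e1 : K - (k + 1) = m := by omega
        have e2 : K - m = k + 1 := by omega
        simp only [hAdef, hPdef, hm, e1, emean, hrec, e2, Nat.add_sub_cancel]
        rw [Finset.sum_comm, Finset.mul_sum]
        refine Finset.sum_congr rfl fun i _ => ?_
        rw [← Finset.sum_mul, mul_assoc])
      (fun k hk j => nuw_step μ _ _ (hπ _) (hπ _) _ (hb _) j)
      (by
        have hone : ∀ x, hrec μ π K (K - 0) x 0 = 1 := by
          intro x
          have := hrec_sum μ π hπ hb K K x
          simpa using this
        have hB0 : B 0 0 = 1 := by
          have := hrec_mean μ π hπ hb K K 0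
          rw [Nat.sub_zero] at hone
          simp only [hone, Nat.sub_self] at this
          simp at this
          exact_mod_cast this.symm
        rw [hB0]
        simp only [hAdef, emean, hone]
        simp
        exact inv_mul_cancel₀ (by simp; omega))
      K le_rfl (A X K) (B K) (fun _ => 0) (by simp) (by simp)
    refine (Wp_triangle p hp _ (wm (s K) (2 ^ K) (A X K)) _ _ (wm_supp _ _ _)).trans ?_
    refine add_le_add c1 ?_
    refine (Wp_triangle p hp _ (wm (s K) (2 ^ K) (B K)) _ _ (wm_supp _ _ _)).trans ?_
    exact add_le_add c2 c3
  have mA : ∀ k i, Measurable fun X => A X k i := fun k i =>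
    measurable_emean n _ (hrec_meas μ π hπ K _ i)
  have mf1 : ∀ k, Measurable fun X => fcost p s P (A X) B k := fun k => by
    unfold fcost
    refine Measurable.pow_const (Finset.measurable_sum _ fun i _ => ?_) _
    exact (((mA (k + 1) i).sub_const _).coe_nnreal_ennreal).mul_const _
  have mf2 : ∀ k, Measurable fun X => fcost p s P B (A X) k := fun k => by
    unfold fcost
    refine Measurable.pow_const (Finset.measurable_sum _ fun i _ => ?_) _
    exact (((mA (k + 1) i).const_sub _).coe_nnreal_ennreal).mul_const _
  have mG : Measurable fun X : Fin n → E =>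
      ((n : ℝ≥0∞)⁻¹ * ∑ l, edist (X l) (s K (π K (X l))) ^ p) ^ (1 / p) := by
    refine Measurable.pow_const (Measurable.const_mul (Finset.measurable_sum _ fun l _ => ?_) _) _
    exact (mI K p).comp (measurable_pi_apply l)
  -- distance between consecutive levels
  have hd : ∀ k, (∫⁻ x, edist (s (k + 1) (π (k + 1) x)) (s k (π k x)) ^ r ∂μ) ^ (1 / r) ≤
      ε (k + 1) + ε k := by
    intro k
    refine le_trans ?_ (add_le_add (hε (k + 1)) (hε k))
    refine le_trans ?_ (ENNReal.lintegral_Lp_add_le (mE (k + 1)).aemeasurable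
      (mE k).aemeasurable (hp.trans hpr))
    refine ENNReal.rpow_le_rpow (lintegral_mono fun x => ?_) (by positivity)
    refine ENNReal.rpow_le_rpow ?_ hr0.le
    exact edist_triangle_left _ _ _
  have hfin : ∀ k (w : ℕ → (Fin n → E) → ℝ≥0), (∀ i, Measurable (w i)) →
      (∀ i ∈ Finset.range (2 ^ (k + 1)), ∫⁻ X, (w i X : ℝ≥0∞) ∂(sampleMeasure μ n) ≤
        ((n : ℝ≥0∞)⁻¹) ^ t * (B (k + 1) i * ((B (k + 1) i : ℝ≥0∞)⁻¹) ^ t)) →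
      (∫⁻ X, ((∑ i ∈ Finset.range (2 ^ (k + 1)), (w i X : ℝ≥0∞) * kcost p s P k i) ^ (1 / p)) ^ p
        ∂(sampleMeasure μ n)) ^ (1 / p) ≤
      ((2 : ℝ≥0∞) ^ (k + 1) * (n : ℝ≥0∞)⁻¹) ^ (1 / p - 1 / r) * (ε (k + 1) + ε k) := by
    intro k w mw hw
    have e0 : ∀ a : ℝ≥0∞, (a ^ (1 / p)) ^ p = a := fun a => by
      rw [← ENNReal.rpow_mul, one_div_mul_cancel hp0.ne', ENNReal.rpow_one]
    simp only [e0]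
    rw [lintegral_finsetSum _ fun i _ => ((mw i).coe_nnreal_ennreal.mul_const _)]
    have b1 : ∑ i ∈ Finset.range (2 ^ (k + 1)),
        ∫⁻ X, (w i X : ℝ≥0∞) * kcost p s P k i ∂(sampleMeasure μ n) ≤
        ((n : ℝ≥0∞)⁻¹) ^ t * (((2 ^ (k + 1) : ℕ) : ℝ≥0∞) ^ t *
          (∫⁻ x, edist (s (k + 1) (π (k + 1) x)) (s k (π k x)) ^ r ∂μ) ^ (p / r)) := by
      calc _ ≤ ∑ i ∈ Finset.range (2 ^ (k + 1)), ((n : ℝ≥0∞)⁻¹) ^ t *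
            ((B (k + 1) i * ((B (k + 1) i : ℝ≥0∞)⁻¹) ^ t) * kcost p s P k i) := by
            refine Finset.sum_le_sum fun i hi => ?_
            rw [lintegral_mul_const _ (mw i).coe_nnreal_ennreal, ← mul_assoc]
            gcongr
            exact hw i hi
        _ ≤ _ := by
            rw [← Finset.mul_sum]
            gcongr
            exact holder_cells μ (π (k + 1)) (π k) (hπ _) (hπ _) _ _ (hb _) (hb _)
              (fun i j => edist (s (k + 1) i) (s k j)) p r t hp0 hpr ht
    refine (ENNReal.rpow_le_rpow b1 (by positivity)).trans ?_
    rw [← mul_assoc, ← ENNReal.mul_rpow_of_nonneg _ _ ht0,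
      ENNReal.mul_rpow_of_nonneg _ _ (by positivity), ← ENNReal.rpow_mul, ← ENNReal.rpow_mul]
    have e1 : t * (1 / p) = 1 / p - 1 / r := by rw [ht]; field_simp
    have e2 : p / r * (1 / p) = 1 / r := by field_simp
    rw [e1, e2, mul_comm ((n : ℝ≥0∞)⁻¹)]
    push_cast
    gcongr
    exact hd k
  have hle1 : ∀ k x i, i ∈ Finset.range (2 ^ (K - k)) → hrec μ π K k x i ≤ 1 := by
    intro k x i hi
    rw [← hrec_sum μ π hπ hb K k x]
    exact Finset.single_le_sum (f := fun i => hrec μ π K k x i) (fun _ _ => bot_le) hi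
  have hwb : ∀ k < K, ∀ i ∈ Finset.range (2 ^ (k + 1)), _ := fun k hk i hi =>
    weight_bound μ n hn (fun x => hrec μ π K (K - (k + 1)) x i) (hrec_meas μ π hπ K _ i)
      (fun x => hle1 _ x i (by rwa [show K - (K - (k + 1)) = k + 1 by omega]))
      (B (k + 1) i) (by
        rw [hrec_mean μ π hπ hb K _ i, show K - (K - (k + 1)) = k + 1 by omega]) t ht0 ht2
  -- expectation
  unfold expWpPow
  calc _ ≤ (∫⁻ X, (((n : ℝ≥0∞)⁻¹ * ∑ l, edist (X l) (s K (π K (X l))) ^ p) ^ (1 / p) +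
      (∑ k ∈ Finset.range K, (fcost p s P (A X) B k + fcost p s P B (A X) k) + ε K)) ^ p
        ∂(sampleMeasure μ n)) ^ (1 / p) := by
        refine ENNReal.rpow_le_rpow (lintegral_mono fun X => ?_) (by positivity)
        exact ENNReal.rpow_le_rpow (hdet X) hp0.le
    _ ≤ (∫⁻ X, (((n : ℝ≥0∞)⁻¹ * ∑ l, edist (X l) (s K (π K (X l))) ^ p) ^ (1 / p)) ^ p
          ∂(sampleMeasure μ n)) ^ (1 / p) +
        (∫⁻ X, (∑ k ∈ Finset.range K, (fcost p s P (A X) B k + fcost p s P B (A X) k) + ε K) ^ p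
        ∂(sampleMeasure μ n)) ^ (1 / p) := by
        refine ENNReal.lintegral_Lp_add_le mG.aemeasurable (Measurable.aemeasurable ?_) hp
        exact (Finset.measurable_sum _ fun k _ => (mf1 k).add (mf2 k)).add_const _
    _ ≤ ε K + (∑ k ∈ Finset.range K,
      2 * (((2 : ℝ≥0∞) ^ (k + 1) * (n : ℝ≥0∞)⁻¹) ^ (1 / p - 1 / r) * (ε (k + 1) + ε k)) + ε K) := by
        refine add_le_add ?_ ?_
        · refine le_trans (le_of_eq ?_) hεp
          congr 1
          rw [← lintegral_emean μ n hn _ (mI K p)]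
          refine lintegral_congr fun X => ?_
          rw [← ENNReal.rpow_mul, one_div_mul_cancel hp0.ne', ENNReal.rpow_one]
        · refine (ENNReal.lintegral_Lp_add_le
            (f := fun X => ∑ k ∈ Finset.range K, (fcost p s P (A X) B k + fcost p s P B (A X) k))
            (g := fun _ => ε K)
            (Finset.measurable_sum _ fun k _ => (mf1 k).add (mf2 k)).aemeasurable
            aemeasurable_const hp).trans ?_
          refine add_le_add ?_ ?_
          · refine (lintegral_Lp_sum_le _ p hp
              (fun k X => fcost p s P (A X) B k + fcost p s P B (A X) k)
              (fun k => (mf1 k).add (mf2 k)) K).trans ?_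
            refine Finset.sum_le_sum fun k hk => ?_
            rw [Finset.mem_range] at hk
            refine (ENNReal.lintegral_Lp_add_le (mf1 k).aemeasurable
              (mf2 k).aemeasurable hp).trans ?_
            rw [two_mul]
            refine add_le_add ?_ ?_
            · exact hfin k (fun i X => A X (k + 1) i - B (k + 1) i)
                (fun i => (mA (k + 1) i).sub_const _) (fun i hi => (hwb k hk i hi).1)
            · exact hfin k (fun i X => B (k + 1) i - A X (k + 1) i)
                (fun i => (mA (k + 1) i).const_sub _) (fun i hi => (hwb k hk i hi).2)
          · rw [lintegral_const, measure_univ, mul_one, ← ENNReal.rpow_mul,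
              mul_one_div_cancel hp0.ne', ENNReal.rpow_one]
    _ = _ := by rw [add_assoc]

lemma sum_bound (K : ℕ) (c ε : ℕ → ℝ≥0∞) (hc : ∀ k, c (k + 1) ≤ 2 * c k) (hK : 1 ≤ 2 * c K) :
    ε K + ∑ k ∈ Finset.range K, 2 * (c (k + 1) * (ε (k + 1) + ε k)) + ε K ≤
      10 * ∑ k ∈ Finset.range (K + 1), c k * ε k := by
  have h1 : ∑ k ∈ Finset.range K, 2 * (c (k + 1) * (ε (k + 1) + ε k)) ≤
      2 * ∑ k ∈ Finset.range (K + 1), c k * ε k + 4 * ∑ k ∈ Finset.range (K + 1), c k * ε k := by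
    calc _ ≤ ∑ k ∈ Finset.range K, (2 * (c (k + 1) * ε (k + 1)) + 4 * (c k * ε k)) := by
          refine Finset.sum_le_sum fun k _ => ?_
          calc 2 * (c (k + 1) * (ε (k + 1) + ε k))
              = 2 * (c (k + 1) * ε (k + 1)) + 2 * (c (k + 1) * ε k) := by ring
            _ ≤ 2 * (c (k + 1) * ε (k + 1)) + 2 * ((2 * c k) * ε k) := by
              gcongr
              exact hc k
            _ = _ := by ring
      _ ≤ _ := by
          rw [Finset.sum_add_distrib, ← Finset.mul_sum, ← Finset.mul_sum]
          refine add_le_add ?_ ?_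
          · rw [Finset.sum_range_succ' (fun k => c k * ε k)]
            gcongr
            exact le_self_add
          · rw [Finset.sum_range_succ (fun k => c k * ε k)]
            gcongr
            exact le_self_add
  have h2 : ε K ≤ 2 * ∑ k ∈ Finset.range (K + 1), c k * ε k := by
    calc ε K = 1 * ε K := (one_mul _).symm
      _ ≤ (2 * c K) * ε K := by gcongr
      _ = 2 * (c K * ε K) := mul_assoc _ _ _
      _ ≤ _ := by
        gcongr
        exact Finset.single_le_sum (f := fun k => c k * ε k) (fun _ _ => bot_le)
          (Finset.self_mem_range_succ K)
  calc _ ≤ 2 * (∑ k ∈ Finset.range (K + 1), c k * ε k) +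
        (2 * ∑ k ∈ Finset.range (K + 1), c k * ε k + 4 * ∑ k ∈ Finset.range (K + 1), c k * ε k) +
        2 * (∑ k ∈ Finset.range (K + 1), c k * ε k) := add_le_add (add_le_add h2 h1) h2
    _ = _ := by ring

lemma main_bound (μ : Measure E) [IsProbabilityMeasure μ] (p r q : ℝ) (hp : 1 ≤ p) (hpr : p ≤ r)
    (hr2 : r ≤ 2 * p) (hrq : r ≤ q) (n : ℕ) (hn : 1 ≤ n) :
    expWpPow p μ n ≤ 10 * ∑ k ∈ Finset.range (Nat.log 2 n + 1),
      ENNReal.ofReal (((2 : ℝ) ^ k / n) ^ (1 / p - 1 / r)) * quantErr q (2 ^ k) μ := by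
  have := UniformSpace.secondCountable_of_separable E
  have hp0 : 0 < p := by linarith
  have hr0 : 0 < r := by linarith
  have hq0 : 0 < q := by linarith
  have hn0 : (0 : ℝ) < n := by exact_mod_cast hn
  set θ : ℝ := 1 / p - 1 / r with hθ
  have hθ0 : 0 ≤ θ := sub_nonneg.2 (one_div_le_one_div_of_le hp0 hpr)
  have hθ1 : θ ≤ 1 := by
    have : 1 / p ≤ 1 := by rw [div_le_one hp0]; exact hp
    have : 0 < 1 / r := by positivity
    linarith
  set c : ℕ → ℝ≥0∞ := fun k => ((2 : ℝ≥0∞) ^ k * (n : ℝ≥0∞)⁻¹) ^ θ with hcdef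
  have hcof : ∀ k, ENNReal.ofReal (((2 : ℝ) ^ k / n) ^ θ) = c k := by
    intro k
    rw [← ENNReal.ofReal_rpow_of_pos (by positivity), div_eq_mul_inv,
      ENNReal.ofReal_mul (by positivity), ENNReal.ofReal_inv_of_pos hn0, ENNReal.ofReal_natCast,
      ENNReal.ofReal_pow (by norm_num), ENNReal.ofReal_ofNat]
  have h2θ : (2 : ℝ≥0∞) ^ θ ≤ 2 := by
    calc (2 : ℝ≥0∞) ^ θ ≤ 2 ^ (1 : ℝ) := ENNReal.rpow_le_rpow_of_exponent_le (by norm_num) hθ1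
      _ = 2 := ENNReal.rpow_one 2
  have hstep : ∀ k, c (k + 1) ≤ 2 * c k := by
    intro k
    simp only [hcdef]
    rw [pow_succ', mul_assoc, ENNReal.mul_rpow_of_nonneg _ _ hθ0]
    gcongr
  set K := Nat.log 2 n with hK
  have hcK : 1 ≤ 2 * c K := by
    have hlt : n < 2 ^ (K + 1) := Nat.lt_pow_succ_log_self (by norm_num) n
    refine le_trans ?_ (hstep K)
    simp only [hcdef]
    rw [← ENNReal.one_rpow θ]
    refine ENNReal.rpow_le_rpow ?_ hθ0
    calc (1 : ℝ≥0∞) = (n : ℝ≥0∞) * (n : ℝ≥0∞)⁻¹ :=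
          (ENNReal.mul_inv_cancel (by simp; omega) (by simp)).symm
      _ ≤ _ := by
        gcongr
        exact_mod_cast hlt.le
  simp only [hcof]
  refine ENNReal.le_of_forall_pos_le_add fun e he _ => ?_
  set T : ℝ≥0∞ := 10 * ∑ k ∈ Finset.range (K + 1), c k with hT
  have hTtop : T ≠ ∞ := by
    rw [hT]
    refine ENNReal.mul_ne_top (by norm_num) (ENNReal.sum_ne_top.2 fun k _ => ?_)
    rw [← hcof]; exact ENNReal.ofReal_ne_top
  obtain ⟨δ, hδ0, hδ⟩ : ∃ δ : ℝ≥0∞, δ ≠ 0 ∧ T * δ ≤ e := by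
    refine ⟨e / (T + 1), ?_, ?_⟩
    · refine (ENNReal.div_pos (by exact_mod_cast he.ne') ?_).ne'
      exact ENNReal.add_ne_top.2 ⟨hTtop, by norm_num⟩
    · calc T * (e / (T + 1)) ≤ (T + 1) * (e / (T + 1)) := by gcongr; exact le_self_add
        _ ≤ e := ENNReal.mul_div_le
  choose s hs using fun k : ℕ => exists_quant μ q hq0 (2 ^ k) δ hδ0
  have mT : ∀ k, Measurable fun x => s k (SimpleFunc.nearestPtInd (s k) (2 ^ k - 1) x) :=
    fun k => (measurable_of_countable (s k)).comp (SimpleFunc.measurable _)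
  have hc := core μ p r hp hpr hr2 n hn s
    (fun k x => SimpleFunc.nearestPtInd (s k) (2 ^ k - 1) x)
    (fun k => SimpleFunc.measurable _)
    (fun k x => by
      have h1 := SimpleFunc.nearestPtInd_le (s k) (2 ^ k - 1) x
      have h2 : 0 < 2 ^ k := by positivity
      omega)
    (fun k => quantErr q (2 ^ k) μ + δ)
    (fun k => (lintegral_rpow_mono μ _ (measurable_id.edist (mT k)) r q hr0 hrq).trans (hs k)) K
  refine hc.trans ((sum_bound K c (fun k => quantErr q (2 ^ k) μ + δ) hstep hcK).trans ?_)
  calc _ = 10 * ∑ k ∈ Finset.range (K + 1), c k * quantErr q (2 ^ k) μ + T * δ := by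
        simp only [mul_add, Finset.sum_add_distrib, hT, ← Finset.sum_mul, mul_assoc]
    _ ≤ _ := by gcongr

end helpers


/-- **Corollary (main4).** Let `(E, d_E)` be a separable metric space, `p ≥ 1`,
`μ ∈ 𝒫_p(E)`, `n ∈ ℕ` and `q ≥ p`. Then
`(𝔼[W_p(μ_n,μ)^p])^{1/p} ≤ 10 ∑_{k=0}^{⌊log₂ n⌋} a_k e_{2^k,q}(μ)`, where
`a_k = C(p,q)(2^k/n)^{1/(2p)}` if `q > 2p`,
`a_k = (⌊log₂ n⌋+1)(2^k/n)^{1/(2p)}` if `q = 2p`,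
`a_k = C(p,q)(2^k/n)^{1/p − 1/q}` if `q < 2p`, with `C(p,q) = 2/|1/(2p) − 1/q|`. -/
theorem stmt_6 {E : Type*} [MetricSpace E] [TopologicalSpace.SeparableSpace E]
    [MeasurableSpace E] [BorelSpace E]
    (p : ℝ) (hp : 1 ≤ p)
    (μ : Measure E) [IsProbabilityMeasure μ] (hμ : HasFiniteMoment p μ)
    (n : ℕ) (hn : 1 ≤ n) (q : ℝ) (hq : p ≤ q) :
    expWpPow p μ n ≤
      10 * ∑ k ∈ Finset.range (Nat.log 2 n + 1),
        (if 2 * p < q then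
            ENNReal.ofReal
              ((2 / |1 / (2 * p) - 1 / q|) * (((2 : ℝ) ^ k / n) ^ (1 / (2 * p))))
          else if q = 2 * p then
            ((Nat.log 2 n + 1 : ℕ) : ℝ≥0∞) *
              ENNReal.ofReal (((2 : ℝ) ^ k / n) ^ (1 / (2 * p)))
          else
            ENNReal.ofReal
              ((2 / |1 / (2 * p) - 1 / q|) * (((2 : ℝ) ^ k / n) ^ (1 / p - 1 / q)))) *
          quantErr q (2 ^ k) μ := by
  have hp0 : 0 < p := by linarith
  have hq0 : 0 < q := by linarith
  have hC : 2 * p ≠ q → 1 ≤ 2 / |1 / (2 * p) - 1 / q| := by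
    intro hne
    have h1 : 0 < |1 / (2 * p) - 1 / q| := by
      rw [abs_pos, sub_ne_zero]
      intro h
      rw [one_div, one_div, inv_inj] at h
      exact hne h
    rw [one_le_div h1, abs_le]
    have a1 : 1 / (2 * p) ≤ 1 := by rw [div_le_one (by linarith)]; linarith
    have a2 : 1 / q ≤ 1 := by rw [div_le_one hq0]; linarith
    have a3 : 0 < 1 / (2 * p) := by positivity
    have a4 : 0 < 1 / q := by positivity
    constructor <;> linarith
  have hθ : 1 / p - 1 / (2 * p) = 1 / (2 * p) := by field_simp; norm_num
  by_cases h1 : 2 * p < q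
  · refine (main_bound μ p (2 * p) q hp (by linarith) le_rfl h1.le n hn).trans ?_
    simp only [if_pos h1, hθ]
    gcongr
    exact le_mul_of_one_le_left (by positivity) (hC h1.ne)
  · by_cases h2 : q = 2 * p
    · refine (main_bound μ p (2 * p) q hp (by linarith) le_rfl h2.ge n hn).trans ?_
      simp only [if_neg h1, if_pos h2, hθ]
      gcongr
      refine le_mul_of_one_le_left bot_le ?_
      exact_mod_cast Nat.succ_pos _
    · refine (main_bound μ p q q hp hq (not_lt.1 h1) le_rfl n hn).trans ?_
      simp only [if_neg h1, if_neg h2]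
      gcongr
      exact le_mul_of_one_le_left (by positivity) (hC (fun h => h2 h.symm))
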